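/- Let μ' be a probability measure on {0,1}^{ℤ²} such that: μ'-almost surely there exists exactly one infinite 0cluster; μ'-almost surely there exists at most one infinite 1*cluster; conditioned on the coexistence of exactly one infinite 0cluster and exactly one infinite 1*cluster, the distribution of the random set S₁* (the filled infinite 1*cluster, which determines the infinite boundary) is invariant under all translations of ℤ²; and with positive μ'-probability an infinite 1*cluster exists. Then there exists a constant c > 0 such that for every site z ∈ ℤ², the μ'-probability that z belongs to an infinite 1*cluster is at least c. -/

import Mathlib

/-!
Conditionally on coexistence, the law of the filled infinite `1*`cluster `S` is translation
invariant, but a site of `S` may lie in a filled-in finite `0`cluster. The sites of `S` having a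
neighbour in an infinite connected component of the complement of `S` cannot: a `*`circuit of the
infinite cluster around such a site would have the same nonzero winding number around the
neighbour, although the neighbour is connected to infinity off the circuit
(`OnInfBoundary.inInfinite1`). On coexistence such sites exist, because a lattice path from the
infinite `0`cluster, which is disjoint from `S`, to `S` must enter `S` somewhere
(`exists_onInfBoundary`). By countability, some site is of this kind with positive probability, and
as the property is a measurable function of `S`, that probability does not depend on the site.

Winding numbers are handled by choosing, for each step of a circuit, an open half-plane containing
all vectors involved; there the arguments of quotients are differences of arguments and the sums
telescope (`windingAround_adj`, `windingAround_eq_zero`).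
-/

open MeasureTheory ProbabilityTheory
open scoped ENNReal

namespace Percolation

/-- Sites of the square lattice. -/
abbrev Site : Type := ℤ × ℤ

/-- Configurations: spins `0`/`1` encoded as `false`/`true`. -/
abbrev Config : Type := Site → Bool

/-- Nearest-neighbour adjacency: Euclidean distance `1`. -/
def adj (x y : Site) : Prop :=
  (x.1 - y.1) ^ 2 + (x.2 - y.2) ^ 2 = 1

/-- `*`adjacency: Euclidean distance `1` or `√2`. -/
def adjStar (x y : Site) : Prop :=
  x ≠ y ∧ |x.1 - y.1| ≤ 1 ∧ |x.2 - y.2| ≤ 1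

/-- `x` and `y` are joined inside `G` by a path whose consecutive sites satisfy `R`. -/
def JoinedIn (R : Site → Site → Prop) (G : Set Site) (x y : Site) : Prop :=
  ∃ P : List Site, P.Chain' R ∧ (∀ z ∈ P, z ∈ G) ∧ P.head? = some x ∧ P.getLast? = some y

/-- `S` is a `0`cluster of `σ`: a maximal `adj`-connected subset of `σ⁻¹(0)`. -/
def IsCluster0 (σ : Config) (S : Set Site) : Prop :=
  S.Nonempty ∧ (∀ z ∈ S, σ z = false) ∧
    (∀ x ∈ S, ∀ y ∈ S, JoinedIn adj S x y) ∧
    (∀ x ∈ S, ∀ y : Site, adj x y → σ y = false → y ∈ S)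

/-- `S` is a `1*`cluster of `σ`: a maximal `adjStar`-connected subset of `σ⁻¹(1)`. -/
def IsCluster1 (σ : Config) (S : Set Site) : Prop :=
  S.Nonempty ∧ (∀ z ∈ S, σ z = true) ∧
    (∀ x ∈ S, ∀ y ∈ S, JoinedIn adjStar S x y) ∧
    (∀ x ∈ S, ∀ y : Site, adjStar x y → σ y = true → y ∈ S)

/-- `x` belongs to an infinite `1*`cluster of `σ`. -/
def InInfinite1 (σ : Config) (x : Site) : Prop :=
  ∃ S : Set Site, IsCluster1 σ S ∧ S.Infinite ∧ x ∈ S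

/-- There is exactly one infinite `0`cluster. -/
def UniqueInfinite0 (σ : Config) : Prop :=
  ∃! S : Set Site, IsCluster0 σ S ∧ S.Infinite

/-- There is exactly one infinite `1*`cluster. -/
def UniqueInfinite1 (σ : Config) : Prop :=
  ∃! S : Set Site, IsCluster1 σ S ∧ S.Infinite

/-- There is at most one infinite `1*`cluster. -/
def AtMostOneInfinite1 (σ : Config) : Prop :=
  ∀ S T : Set Site, IsCluster1 σ S → S.Infinite → IsCluster1 σ T → T.Infinite → S = T

/-- An infinite `1*`cluster exists. -/
def ExistsInfinite1 (σ : Config) : Prop := ∃ S : Set Site, IsCluster1 σ S ∧ S.Infinite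

/-- An infinite `0`cluster exists. -/
def ExistsInfinite0 (σ : Config) : Prop := ∃ S : Set Site, IsCluster0 σ S ∧ S.Infinite

/-- An increasing event. -/
def IncreasingEvent (A : Set Config) : Prop :=
  ∀ ⦃ξ η : Config⦄, ξ ∈ A → ξ ≤ η → η ∈ A

/-- Positive association: increasing events are positively correlated. -/
def PositivelyAssociated (μ : Measure Config) : Prop :=
  ∀ A B : Set Config, MeasurableSet A → MeasurableSet B →
    IncreasingEvent A → IncreasingEvent B → μ A * μ B ≤ μ (A ∩ B)

/-- The cylinder event "`η` on `Δ`". -/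
def cylEvent (Δ : Finset Site) (η : Site → Bool) : Set Config :=
  {σ | ∀ z ∈ Δ, σ z = η z}

/-- The σ-algebra generated by the spins outside `Δ`. -/
def outsideAlgebra (Δ : Finset Site) : MeasurableSpace Config :=
  MeasurableSpace.comap (fun σ (z : {z : Site // z ∉ Δ}) => σ z.1) inferInstance

/-- The bounded energy condition: `μ(η on Δ | ξ off Δ) ≥ c_{|Δ|}` for a.e. `ξ`, expressed
via integrated conditional probabilities against events of the outside σ-algebra. -/
def BoundedEnergy (μ : Measure Config) : Prop :=
  ∀ n : ℕ, ∃ c : ℝ≥0∞, 0 < c ∧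
    ∀ Δ : Finset Site, Δ.card = n → ∀ η : Site → Bool,
      ∀ B : Set Config, MeasurableSet[outsideAlgebra Δ] B →
        c * μ B ≤ μ (cylEvent Δ η ∩ B)

/-- The finite energy condition: `μ(η on Δ | ξ off Δ) > 0` for a.e. `ξ`, expressed
via integrated conditional probabilities against events of the outside σ-algebra. -/
def FiniteEnergy (μ : Measure Config) : Prop :=
  ∀ (Δ : Finset Site) (η : Site → Bool) (B : Set Config),
    MeasurableSet[outsideAlgebra Δ] B → 0 < μ B → 0 < μ (cylEvent Δ η ∩ B)

/-- The tail σ-algebra. -/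
def tailAlgebra : MeasurableSpace Config :=
  ⨅ Δ : Finset Site, outsideAlgebra Δ

/-- Translation of configurations by `v`. -/
def shift (v : Site) (σ : Config) : Config := fun z => σ (z + v)

/-- A site viewed as a complex number. -/
noncomputable def toC (z : Site) : ℂ := (z.1 : ℂ) + (z.2 : ℂ) * Complex.I

/-- Winding number around the origin of the polygonal curve through the sites of `P`. -/
noncomputable def winding (P : List Site) : ℝ :=
  (1 / (2 * Real.pi)) *
    ((P.zip P.tail).map fun p => Complex.arg (toC p.2 / toC p.1)).sum

/-- Winding number of `P` around the site `w`. -/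
noncomputable def windingAround (P : List Site) (w : Site) : ℝ :=
  winding (P.map fun z => z - w)

/-- The site `w` lies in the interior of the circuit `C`, i.e. is enclosed by `C`. -/
def circuitEncloses (C : List Site) (w : Site) : Prop :=
  w ∉ C ∧ windingAround (C ++ C.take 1) w ≠ 0

/-- A circuit: a path whose starting site is adjacent to its ending site. -/
def IsCircuit (C : List Site) : Prop :=
  C.Chain' adj ∧ ∃ h : C ≠ [], adj (C.getLast h) (C.head h)

/-- A `*`circuit: a `*`path whose starting site is `*`adjacent to its ending site. -/
def IsStarCircuit (C : List Site) : Prop :=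
  C.Chain' adjStar ∧ ∃ h : C ≠ [], adjStar (C.getLast h) (C.head h)

/-- A (finite) `1*`path with respect to `σ`. -/
def Is1StarPath (σ : Config) (P : List Site) : Prop :=
  P ≠ [] ∧ P.Chain' adjStar ∧ ∀ z ∈ P, σ z = true

/-- A (finite) `0`path with respect to `σ`. -/
def Is0Path (σ : Config) (P : List Site) : Prop :=
  P ≠ [] ∧ P.Chain' adj ∧ ∀ z ∈ P, σ z = false

/-- A `1*`circuit with respect to `σ`. -/
def Is1StarCircuit (σ : Config) (C : List Site) : Prop :=
  IsStarCircuit C ∧ ∀ z ∈ C, σ z = true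

/-- A `0`circuit with respect to `σ`. -/
def Is0Circuit (σ : Config) (C : List Site) : Prop :=
  IsCircuit C ∧ ∀ z ∈ C, σ z = false

/-- `C` is a circuit around `Δ`: every site of `Δ` is enclosed by `C`. -/
def CircuitAround (C : List Site) (Δ : Set Site) : Prop :=
  ∀ z ∈ Δ, circuitEncloses C z

/-- A mixed circuit with respect to `σ`: a self-avoiding `*`circuit consisting of a
self-avoiding `1*`path followed by a self-avoiding `0`path (either part may be empty). -/
def IsMixedCircuit (σ : Config) (C : List Site) : Prop :=
  ∃ P Q : List Site, C = P ++ Q ∧ C.Nodup ∧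
    P.Chain' adjStar ∧ Q.Chain' adj ∧
    (∀ z ∈ P, σ z = true) ∧ (∀ z ∈ Q, σ z = false) ∧ IsStarCircuit C

/-- `z` lies in the exterior of the circuit `C`. -/
def InExterior (C : List Site) (z : Site) : Prop :=
  z ∉ C ∧ ¬ circuitEncloses C z

/-- An infinite self-avoiding `1*`path with respect to `σ`. -/
def IsInfSA1StarPath (σ : Config) (f : ℕ → Site) : Prop :=
  Function.Injective f ∧ (∀ i, adjStar (f i) (f (i + 1))) ∧ ∀ i, σ (f i) = true

/-- An infinite self-avoiding `0`path with respect to `σ`. -/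
def IsInfSA0Path (σ : Config) (f : ℕ → Site) : Prop :=
  Function.Injective f ∧ (∀ i, adj (f i) (f (i + 1))) ∧ ∀ i, σ (f i) = false

/-- There exist `n` pairwise disjoint infinite self-avoiding `1*`paths. -/
def HasNDisjoint1 (σ : Config) (n : ℕ) : Prop :=
  ∃ f : Fin n → ℕ → Site, (∀ i, IsInfSA1StarPath σ (f i)) ∧
    ∀ i j, i ≠ j → Disjoint (Set.range (f i)) (Set.range (f j))

/-- A two-sided infinite self-avoiding `1*`path with respect to `σ`. -/
def IsTwoSidedInf1 (σ : Config) (f : ℤ → Site) : Prop :=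
  Function.Injective f ∧ (∀ i : ℤ, adjStar (f i) (f (i + 1))) ∧ ∀ i : ℤ, σ (f i) = true

/-- A `1*`path of `σ` from `x` to `y` avoiding `Δ`. -/
def starPathBetweenAvoiding (σ : Config) (Δ : Set Site) (x y : Site) (P : List Site) : Prop :=
  Is1StarPath σ P ∧ P.head? = some x ∧ P.getLast? = some y ∧ ∀ z ∈ P, z ∉ Δ

/-- `x` is on the left side of `Γ`. -/
def OnLeftSide (x : Site) (Γ : Set Site) : Prop :=
  ∃ d : ℕ, 0 < d ∧ (∀ z ∈ Γ, |z.1| ≤ (d : ℤ) ∧ |z.2| ≤ (d : ℤ)) ∧ x.1 ≤ -(d : ℤ)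

/-- `x` is on the right side of `Γ`. -/
def OnRightSide (x : Site) (Γ : Set Site) : Prop :=
  ∃ d : ℕ, 0 < d ∧ (∀ z ∈ Γ, |z.1| ≤ (d : ℤ) ∧ |z.2| ≤ (d : ℤ)) ∧ (d : ℤ) ≤ x.1

/-- The square `{-n, …, n}²`. -/
def square (n : ℕ) : Set Site := {z : Site | |z.1| ≤ (n : ℤ) ∧ |z.2| ≤ (n : ℤ)}

/-- The `*`boundary `∂*B` of a set of sites. -/
def starBoundary (B : Set Site) : Set Site :=
  {x | x ∉ B ∧ ∃ y ∈ B, adjStar x y}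

/-- The union of all infinite `1*`clusters of `σ`. -/
def InfinitePart1 (σ : Config) : Set Site := {z | InInfinite1 σ z}

/-- The filled infinite `1*`cluster `S₁*`: the infinite `1*`cluster together with all
finite `0`clusters `*`encircled by it. -/
def Fill (σ : Config) : Set Site :=
  InfinitePart1 σ ∪
    {z | ∃ F : Set Site, IsCluster0 σ F ∧ F.Finite ∧ z ∈ F ∧
      ∃ C : List Site, IsStarCircuit C ∧ (∀ w ∈ C, w ∈ InfinitePart1 σ) ∧
        ∀ w ∈ F, circuitEncloses C w}

/-- The indicator of the filled infinite `1*`cluster, as a point of `{0,1}^{ℤ²}`. -/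
noncomputable def fillInd (σ : Config) : Site → Bool :=
  fun z => @decide (z ∈ Fill σ) (Classical.propDecidable _)

/-- Exactly one infinite `0`cluster and exactly one infinite `1*`cluster coexist. -/
def CoexistUnique (σ : Config) : Prop := UniqueInfinite0 σ ∧ UniqueInfinite1 σ


/-! ### Paths and clusters -/

/-- `x` is joined inside `G` to infinitely many sites: outside every finite set of sites there is
a site joined to `x` inside `G`. -/
def ReachInf (R : Site → Site → Prop) (G : Set Site) (x : Site) : Prop :=
  ∀ T : Finset Site, ∃ w, w ∉ T ∧ JoinedIn R G x w

lemma JoinedIn.mono {R : Site → Site → Prop} {G H : Set Site} (h : G ⊆ H) {x y : Site} :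
    JoinedIn R G x y → JoinedIn R H x y := by
  rintro ⟨P, h1, h2, h3, h4⟩
  exact ⟨P, h1, fun z hz => h (h2 z hz), h3, h4⟩

lemma JoinedIn.left_mem {R : Site → Site → Prop} {G : Set Site} {x y : Site}
    (h : JoinedIn R G x y) : x ∈ G := by
  obtain ⟨P, h1, h2, h3, h4⟩ := h
  exact h2 x (List.mem_of_mem_head? h3)

lemma JoinedIn.right_mem {R : Site → Site → Prop} {G : Set Site} {x y : Site}
    (h : JoinedIn R G x y) : y ∈ G := by
  obtain ⟨P, h1, h2, h3, h4⟩ := h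
  exact h2 y (List.mem_of_mem_getLast? h4)

lemma JoinedIn.refl {R : Site → Site → Prop} {G : Set Site} {x : Site} (h : x ∈ G) :
    JoinedIn R G x x :=
  ⟨[x], List.isChain_singleton x, by simpa using h, rfl, rfl⟩

lemma JoinedIn.cons {R : Site → Site → Prop} {G : Set Site} {x y z : Site} (hx : x ∈ G)
    (hxy : R x y) (h : JoinedIn R G y z) : JoinedIn R G x z := by
  obtain ⟨P, h1, h2, h3, h4⟩ := h
  cases P with
  | nil => simp at h3
  | cons a l =>
    obtain rfl : a = y := by simpa using h3
    refine ⟨x :: a :: l, List.IsChain.cons_cons hxy h1, ?_, rfl, ?_⟩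
    · intro z hz
      rcases List.mem_cons.1 hz with rfl | hz
      · exact hx
      · exact h2 z hz
    · simpa [List.getLast?_cons_cons] using h4

/-- Induction along a path, from its last site backwards. -/
lemma JoinedIn.induct {R : Site → Site → Prop} {G : Set Site} {z : Site} {Q : Site → Prop}
    (h0 : z ∈ G → Q z)
    (hs : ∀ x y, x ∈ G → R x y → JoinedIn R G y z → Q y → Q x) {x : Site}
    (h : JoinedIn R G x z) : Q x := by
  obtain ⟨P, h1, h2, h3, h4⟩ := h
  induction P generalizing x with
  | nil => simp at h3
  | cons a l ih =>
    obtain rfl : a = x := by simpa using h3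
    cases l with
    | nil =>
      obtain rfl : a = z := by simpa using h4
      exact h0 (h2 a (by simp))
    | cons b l =>
      have h1' := List.isChain_cons_cons.1 h1
      have h4' : (b :: l).getLast? = some z := by simpa [List.getLast?_cons_cons] using h4
      have h2' : ∀ z ∈ b :: l, z ∈ G := fun z hz => h2 z (List.mem_cons_of_mem _ hz)
      exact hs a b (h2 a (by simp)) h1'.1 ⟨b :: l, h1'.2, h2', rfl, h4'⟩
        (ih h1'.2 h2' rfl h4')

lemma JoinedIn.trans {R : Site → Site → Prop} {G : Set Site} {x y z : Site}
    (h : JoinedIn R G x y) (h' : JoinedIn R G y z) : JoinedIn R G x z :=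
  h.induct (Q := fun x => JoinedIn R G x z) (fun _ => h') fun _ _ hx hxy _ ih => ih.cons hx hxy

lemma JoinedIn.symm {R : Site → Site → Prop} (hR : ∀ x y, R x y → R y x) {G : Set Site}
    {x y : Site} (h : JoinedIn R G x y) : JoinedIn R G y x :=
  h.induct (Q := fun x => JoinedIn R G y x) JoinedIn.refl fun a b ha hab hb ih =>
    ih.trans ((JoinedIn.refl ha).cons hb.left_mem (hR _ _ hab))

lemma adj_symm (x y : Site) (h : adj x y) : adj y x := by
  unfold adj at *; linarith [h]

lemma adjStar_symm (x y : Site) (h : adjStar x y) : adjStar y x := by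
  unfold adjStar at *
  rw [abs_sub_comm y.1, abs_sub_comm y.2]
  exact ⟨h.1.symm, h.2⟩

/-- `z` lies in an infinite `1*`cluster iff the `1*`paths from `z` reach infinitely many sites. -/
lemma inInfinite1_iff (σ : Config) (z : Site) :
    InInfinite1 σ z ↔ ReachInf adjStar {w | σ w = true} z := by
  constructor
  · rintro ⟨S, ⟨-, h1, h2, -⟩, hinf, hz⟩ T
    obtain ⟨w, hw, hwT⟩ := hinf.exists_notMem_finset T
    exact ⟨w, hwT, (h2 z hz w hw).mono h1⟩
  · intro h
    set G : Set Site := {w | σ w = true}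
    have hz : z ∈ G := by
      obtain ⟨w, -, hw⟩ := h ∅
      exact hw.left_mem
    -- the cluster of `z` consists of the sites joined to `z`
    have key : ∀ x, JoinedIn adjStar G x z →
        JoinedIn adjStar {w | JoinedIn adjStar G w z} x z := fun x hx =>
      hx.induct (Q := fun x => JoinedIn adjStar {w | JoinedIn adjStar G w z} x z)
        (fun hz => JoinedIn.refl (JoinedIn.refl hz))
        fun _ _ ha hab hb ih => ih.cons (hb.cons ha hab) hab
    refine ⟨{w | JoinedIn adjStar G w z}, ⟨⟨z, JoinedIn.refl hz⟩, ?_, ?_, ?_⟩, ?_,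
      JoinedIn.refl hz⟩
    · intro w hw
      exact hw.left_mem
    · intro x hx y hy
      exact (key x hx).trans ((key y hy).symm adjStar_symm)
    · intro x hx y hxy hy
      exact hx.cons hy (adjStar_symm _ _ hxy)
    · intro hfin
      obtain ⟨w, hw, hw'⟩ := h hfin.toFinset
      exact hw (hfin.mem_toFinset.2 (hw'.symm adjStar_symm))

/-- A `0`cluster meeting another one contains it. -/
lemma IsCluster0.subset {σ : Config} {F I : Set Site} (hF : IsCluster0 σ F)
    (hI : IsCluster0 σ I) {x : Site} (hxF : x ∈ F) (hxI : x ∈ I) : I ⊆ F := by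
  intro y hy
  refine (hI.2.2.1 y hy x hxI).induct (Q := fun y => y ∈ F) (fun _ => hxF) ?_
  intro a b ha hab _ hb
  exact hF.2.2.2 b hb a (adj_symm _ _ hab) (hI.2.1 a ha)

/-- The square lattice is connected. -/
lemma adj_induction {Q : Site → Prop} (h : ∀ x y, adj x y → Q x → Q y) {x : Site} (hx : Q x)
    (y : Site) : Q y := by
  obtain ⟨a, b⟩ := x
  have h1 : ∀ n : ℤ, Q (a + n, b) := by
    intro n
    induction n using Int.induction_on with
    | zero => simpa using hx
    | succ n ih => exact h _ _ (by simp [adj]) ih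
    | pred n ih => exact h _ _ (by simp [adj]) ih
  have h2 : ∀ m n : ℤ, Q (a + n, b + m) := by
    intro m n
    induction m using Int.induction_on with
    | zero => simpa using h1 n
    | succ n ih => exact h _ _ (by simp [adj]) ih
    | pred n ih => exact h _ _ (by simp [adj]) ih
  simpa using h2 (y.2 - b) (y.1 - a)

/-! ### Winding numbers -/

/-- The angle from the direction `u` to `v`. -/
noncomputable def angleFrom (u v : Site) : ℝ :=
  Complex.arg (toC v * (starRingEnd ℂ) (toC u))

/-- `v` lies in the open half-plane with inner normal `u`. -/
def InHalf (u v : Site) : Prop := 0 < u.1 * v.1 + u.2 * v.2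

lemma arg_div_of_re_pos {A B : ℂ} (hA : 0 < A.re) (hB : 0 < B.re) :
    Complex.arg (A / B) = Complex.arg A - Complex.arg B := by
  have hA' := abs_lt.1 (Complex.abs_arg_lt_pi_div_two_iff.2 (Or.inl hA))
  have hB' := abs_lt.1 (Complex.abs_arg_lt_pi_div_two_iff.2 (Or.inl hB))
  have hA0 : A ≠ 0 := by rintro rfl; simp at hA
  have hB0 : B ≠ 0 := by rintro rfl; simp at hB
  have hi : Complex.arg B⁻¹ = -Complex.arg B := by
    rw [Complex.arg_inv, if_neg]
    linarith [Real.pi_pos]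
  rw [div_eq_mul_inv, Complex.arg_mul hA0 (inv_ne_zero hB0), hi, sub_eq_add_neg]
  rw [hi]
  constructor <;> linarith

/-- Within an open half-plane, angles subtract without any multiple of `2π`. -/
lemma arg_toC_div {u v w : Site} (hv : InHalf u v) (hw : InHalf u w) :
    Complex.arg (toC v / toC w) = angleFrom u v - angleFrom u w := by
  have re : ∀ v : Site, (toC v * (starRingEnd ℂ) (toC u)).re
      = ((u.1 * v.1 + u.2 * v.2 : ℤ) : ℝ) := by
    intro v
    simp [toC]
    ring
  have hu : (starRingEnd ℂ) (toC u) ≠ 0 := by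
    intro h0
    have := re v
    rw [h0] at this
    have h' : ((u.1 * v.1 + u.2 * v.2 : ℤ) : ℝ) = 0 := by simpa using this.symm
    have h'' : u.1 * v.1 + u.2 * v.2 = 0 := by exact_mod_cast h'
    exact absurd hv (by simp [InHalf, h''])
  unfold angleFrom
  rw [← arg_div_of_re_pos, mul_div_mul_right _ _ hu]
  · rw [re]; exact_mod_cast hv
  · rw [re]; exact_mod_cast hw

/-- Two real-valued functions of the steps of a path which differ by the increment of `h` have sums
differing by the total increment of `h`. -/
lemma sum_zip_telescope (f g : Site → Site → ℝ) (h : Site → ℝ) (a : Site) (l : List Site)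
    (hl : (a :: l).IsChain fun x y => f x y = g x y + (h y - h x)) :
    (((a :: l).zip l).map fun p => f p.1 p.2).sum
      = (((a :: l).zip l).map fun p => g p.1 p.2).sum
        + (h ((a :: l).getLast (by simp)) - h a) := by
  induction l generalizing a with
  | nil => simp
  | cons b l ih =>
    rw [List.isChain_cons_cons] at hl
    have := ih b hl.2
    rw [List.zip_cons_cons, List.map_cons, List.map_cons, List.sum_cons, List.sum_cons, this,
      List.getLast_cons (List.cons_ne_nil b l), hl.1]
    ring

lemma windingAround_eq (a : Site) (l : List Site) (w : Site) :
    windingAround (a :: l) w = (1 / (2 * Real.pi)) *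
      (((a :: l).zip l).map fun p => Complex.arg (toC (p.2 - w) / toC (p.1 - w))).sum := by
  unfold windingAround winding
  rw [← List.map_tail, List.zip_map, List.map_map]
  rfl

/-- A closed `*`path which keeps to an open half-plane as seen from `w` has winding number zero
around `w`. -/
lemma windingAround_eq_zero {a : Site} {l : List Site} {w u : Site}
    (h : ∀ z ∈ a :: l, InHalf u (z - w)) : windingAround (a :: l ++ [a]) w = 0 := by
  have hch : (a :: (l ++ [a])).IsChain fun x y =>
      Complex.arg (toC (y - w) / toC (x - w))
        = 0 + (angleFrom u (y - w) - angleFrom u (x - w)) := by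
    have h' : ∀ z ∈ a :: (l ++ [a]), InHalf u (z - w) := by
      intro z hz
      apply h
      simp at hz ⊢
      tauto
    refine List.Pairwise.isChain (List.Pairwise.imp_of_mem (R := fun _ _ => True) ?_ ?_)
    · intro x y hx hy _
      rw [arg_toC_div (h' y hy) (h' x hx), zero_add]
    · exact List.pairwise_of_forall (by simp)
  have := sum_zip_telescope (fun x y => Complex.arg (toC (y - w) / toC (x - w))) (fun _ _ => 0)
    (fun x => angleFrom u (x - w)) a (l ++ [a]) hch
  rw [List.cons_append, windingAround_eq, this]
  simp

/-- A `*`edge and a lattice edge without common endpoint are disjoint segments, so the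
four difference vectors lie in a common open half-plane. -/
lemma exists_half {w w' p q : Site} (hw : adj w w') (hpq : adjStar p q) (h1 : p ≠ w) (h2 : p ≠ w')
    (h3 : q ≠ w) (h4 : q ≠ w') :
    ∃ u, InHalf u (p - w) ∧ InHalf u (q - w) ∧ InHalf u (p - w') ∧ InHalf u (q - w') := by
  obtain ⟨w1, w2⟩ := w
  obtain ⟨v1, v2⟩ := w'
  obtain ⟨p1, p2⟩ := p
  obtain ⟨q1, q2⟩ := q
  obtain ⟨-, hx, hy⟩ := hpq
  rw [abs_le] at hx hy
  simp only [ne_eq, Prod.mk.injEq] at h1 h2 h3 h4 hx hy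
  have he : (v1 = w1 + 1 ∧ v2 = w2) ∨ (v1 = w1 - 1 ∧ v2 = w2) ∨ (v1 = w1 ∧ v2 = w2 + 1) ∨
      (v1 = w1 ∧ v2 = w2 - 1) := by
    simp only [adj] at hw
    have a1 : -1 ≤ w1 - v1 := by nlinarith [sq_nonneg (w2 - v2)]
    have a2 : w1 - v1 ≤ 1 := by nlinarith [sq_nonneg (w2 - v2)]
    have a3 : -1 ≤ w2 - v2 := by nlinarith [sq_nonneg (w1 - v1)]
    have a4 : w2 - v2 ≤ 1 := by nlinarith [sq_nonneg (w1 - v1)]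
    generalize hA : w1 - v1 = A at *
    generalize hB : w2 - v2 = B at *
    interval_cases A <;> interval_cases B <;> simp at hw <;> omega
  -- the directions along the axes and the diagonals suffice
  have hu : ∀ u1 u2 : ℤ,
      (0 < u1 * (p1 - w1) + u2 * (p2 - w2) ∧ 0 < u1 * (q1 - w1) + u2 * (q2 - w2) ∧
        0 < u1 * (p1 - v1) + u2 * (p2 - v2) ∧ 0 < u1 * (q1 - v1) + u2 * (q2 - v2)) →
      ∃ u, InHalf u ((p1, p2) - (w1, w2)) ∧ InHalf u ((q1, q2) - (w1, w2)) ∧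
        InHalf u ((p1, p2) - (v1, v2)) ∧ InHalf u ((q1, q2) - (v1, v2)) :=
    fun u1 u2 h => ⟨(u1, u2), h⟩
  have s1 := lt_trichotomy p1 w1
  have s2 := lt_trichotomy p2 w2
  have s3 := lt_trichotomy q1 w1
  have s4 := lt_trichotomy q2 w2
  rcases he with ⟨rfl, rfl⟩ | ⟨rfl, rfl⟩ | ⟨rfl, rfl⟩ | ⟨rfl, rfl⟩ <;>
  rcases s1 with s1 | s1 | s1 <;> rcases s2 with s2 | s2 | s2 <;>
  rcases s3 with s3 | s3 | s3 <;> rcases s4 with s4 | s4 | s4 <;>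
  first
  | (exfalso; omega)
  | exact hu 1 0 (by omega)
  | exact hu (-1) 0 (by omega)
  | exact hu 0 1 (by omega)
  | exact hu 0 (-1) (by omega)
  | exact hu 1 1 (by omega)
  | exact hu 1 (-1) (by omega)
  | exact hu (-1) 1 (by omega)
  | exact hu (-1) (-1) (by omega)

/-- The winding number of a closed `*`path is the same around adjacent sites off the path. -/
lemma windingAround_adj {a : Site} {l : List Site} {w w' : Site}
    (hc : (a :: l ++ [a]).IsChain adjStar) (hw : w ∉ a :: l) (hw' : w' ∉ a :: l)
    (hww : adj w w') :
    windingAround (a :: l ++ [a]) w = windingAround (a :: l ++ [a]) w' := by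
  have hne : ∀ z ∈ a :: (l ++ [a]), z ≠ w ∧ z ≠ w' := by
    intro z hz
    have hz' : z ∈ a :: l := by
      simp at hz ⊢
      tauto
    exact ⟨fun h => hw (h ▸ hz'), fun h => hw' (h ▸ hz')⟩
  have hch : (a :: (l ++ [a])).IsChain fun x y =>
      Complex.arg (toC (y - w) / toC (x - w)) = Complex.arg (toC (y - w') / toC (x - w'))
        + (Complex.arg (toC (y - w) / toC (y - w')) - Complex.arg (toC (x - w) / toC (x - w'))) := by
    refine List.IsChain.imp_of_mem_imp ?_ hc
    intro x y hx hy hxy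
    obtain ⟨u, u1, u2, u3, u4⟩ := exists_half hww hxy (hne x hx).1 (hne x hx).2 (hne y hy).1
      (hne y hy).2
    rw [arg_toC_div u2 u1, arg_toC_div u4 u3, arg_toC_div u2 u4, arg_toC_div u1 u3]
    ring
  have := sum_zip_telescope (fun x y => Complex.arg (toC (y - w) / toC (x - w)))
    (fun x y => Complex.arg (toC (y - w') / toC (x - w')))
    (fun x => Complex.arg (toC (x - w) / toC (x - w'))) a (l ++ [a]) hch
  rw [List.cons_append, windingAround_eq, windingAround_eq, this]
  simp

/-- A site from which one reaches infinity without meeting the `*`circuit `C` has winding number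
zero. -/
lemma windingAround_eq_zero_of_reachInf {C : List Site} (hC : IsStarCircuit C) {G : Set Site}
    (hG : ∀ z ∈ G, z ∉ C) {x : Site} (hx : ReachInf adj G x) :
    windingAround (C ++ C.take 1) x = 0 := by
  obtain ⟨hch, hne, hlast⟩ := hC
  cases C with
  | nil => simp at hne
  | cons a l =>
    have hch' : (a :: l ++ [a]).IsChain adjStar := by
      refine List.IsChain.append hch (List.isChain_singleton a) ?_
      intro y hy z hz
      rw [List.getLast?_eq_getLast_of_ne_nil hne] at hy
      simp at hy hz
      subst hy hz
      simpa using hlast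
    have htake : (a :: l).take 1 = [a] := by simp
    rw [htake]
    obtain ⟨N, hN⟩ : ∃ N : ℤ, ∀ z ∈ a :: l, |z.1| ≤ N ∧ |z.2| ≤ N := by
      refine ⟨((a :: l).map fun z => |z.1| + |z.2|).sum, fun z hz => ?_⟩
      have : |z.1| + |z.2| ≤ ((a :: l).map fun z => |z.1| + |z.2|).sum :=
        List.single_le_sum (by
          intro x hx
          obtain ⟨y, -, rfl⟩ := List.mem_map.1 hx
          positivity) _ (List.mem_map_of_mem hz)
      constructor <;> linarith [abs_nonneg z.1, abs_nonneg z.2]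
    obtain ⟨w, hw, hxw⟩ := hx (Finset.Icc (-N, -N) (N, N))
    have hw0 : windingAround (a :: l ++ [a]) w = 0 := by
      have hcase : N < w.1 ∨ w.1 < -N ∨ N < w.2 ∨ w.2 < -N := by
        by_contra hcon
        push Not at hcon
        apply hw
        rw [Finset.mem_Icc, Prod.le_def, Prod.le_def]
        exact ⟨⟨hcon.2.1, hcon.2.2.2⟩, hcon.1, hcon.2.2.1⟩
      rcases hcase with h | h | h | h
      · refine windingAround_eq_zero (u := (-1, 0)) fun z hz => ?_
        have := abs_le.1 (hN z hz).1
        simp [InHalf]; omega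
      · refine windingAround_eq_zero (u := (1, 0)) fun z hz => ?_
        have := abs_le.1 (hN z hz).1
        simp [InHalf]; omega
      · refine windingAround_eq_zero (u := (0, -1)) fun z hz => ?_
        have := abs_le.1 (hN z hz).2
        simp [InHalf]; omega
      · refine windingAround_eq_zero (u := (0, 1)) fun z hz => ?_
        have := abs_le.1 (hN z hz).2
        simp [InHalf]; omega
    refine hxw.induct (Q := fun y => windingAround (a :: l ++ [a]) y = 0) (fun _ => hw0) ?_
    intro y y' hy hstep hy' ih
    rw [← ih]
    exact windingAround_adj hch' (hG y hy) (hG y' hy'.left_mem) hstep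

/-! ### Sites on the unbounded boundary of the filled cluster -/

/-- `x` belongs to the set with indicator `s` and has a neighbour in an infinite connected
component of the complement. -/
def OnInfBoundary (s : Site → Bool) (x : Site) : Prop :=
  s x = true ∧ ∃ y, adj x y ∧ ReachInf adj {z | s z = false} y

lemma fillInd_eq_false (σ : Config) : {z | fillInd σ z = false} = (Fill σ)ᶜ := by
  ext z; simp [fillInd]

lemma fillInd_eq_true (σ : Config) (z : Site) : fillInd σ z = true ↔ z ∈ Fill σ := by
  simp [fillInd]

/-- A site of a filled-in `0`cluster cannot be on the unbounded boundary of the filled cluster: its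
outer neighbour has the same, nonzero, winding number, yet reaches infinity off the circuit. -/
lemma OnInfBoundary.inInfinite1 {σ : Config} {x : Site} (h : OnInfBoundary (fillInd σ) x) :
    InInfinite1 σ x := by
  obtain ⟨hx, y, hxy, hy⟩ := h
  rw [fillInd_eq_true] at hx
  rw [fillInd_eq_false] at hy
  rcases hx with hx | ⟨F, -, -, hxF, C, hC, hCS, hCF⟩
  · exact hx
  · exfalso
    obtain ⟨hxC, hwind⟩ := hCF x hxF
    apply hwind
    have hfill : ∀ z ∈ (Fill σ)ᶜ, z ∉ C := fun z hz hzC => hz (Or.inl (hCS z hzC))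
    -- `x` itself may be added to the region, as it is off the circuit
    refine windingAround_eq_zero_of_reachInf (G := insert x (Fill σ)ᶜ) hC ?_ ?_
    · rintro z (rfl | hz)
      · exact hxC
      · exact hfill z hz
    · intro T
      obtain ⟨w, hw, hyw⟩ := hy T
      exact ⟨w, hw, (hyw.mono (Set.subset_insert _ _)).cons (Set.mem_insert _ _) hxy⟩

/-- If both kinds of infinite clusters exist, the unbounded boundary is nonempty. -/
lemma exists_onInfBoundary {σ : Config} (h0 : ExistsInfinite0 σ) (h1 : ExistsInfinite1 σ) :
    ∃ x, OnInfBoundary (fillInd σ) x := by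
  obtain ⟨I, hI, hIinf⟩ := h0
  obtain ⟨S, hS, hSinf⟩ := h1
  obtain ⟨s, hs⟩ := hS.1
  have hsF : s ∈ Fill σ := Or.inl ⟨S, hS, hSinf, hs⟩
  have hIF : I ⊆ (Fill σ)ᶜ := by
    rintro x hx (⟨S', hS', -, hxS'⟩ | ⟨F, hF, hFfin, hxF, -⟩)
    · simpa [hI.2.1 x hx] using hS'.2.1 x hxS'
    · exact hIinf (hFfin.subset (hF.subset hI hxF hx))
  obtain ⟨x, hx⟩ := hI.1
  have hxr : ReachInf adj (Fill σ)ᶜ x := by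
    intro T
    obtain ⟨w, hw, hwT⟩ := hIinf.exists_notMem_finset T
    exact ⟨w, hwT, (hI.2.2.1 x hx w hw).mono hIF⟩
  by_contra hcon
  push Not at hcon
  -- otherwise the infinite component of the complement would be closed under adjacency
  have hall := adj_induction (Q := fun y => ReachInf adj (Fill σ)ᶜ y) ?_ hxr s
  · obtain ⟨w, -, hw⟩ := hall ∅
    exact hw.left_mem hsF
  · intro a b hab ha
    by_cases hb : b ∈ Fill σ
    · exact absurd ⟨(fillInd_eq_true σ b).2 hb, a, adj_symm _ _ hab,
        by rw [fillInd_eq_false]; exact ha⟩ (hcon b)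
    · intro T
      obtain ⟨w, hw, haw⟩ := ha T
      exact ⟨w, hw, haw.cons hb (adj_symm _ _ hab)⟩

lemma OnInfBoundary.of_shift {s : Site → Bool} {v x : Site}
    (h : OnInfBoundary (fun z => s (z + v)) x) : OnInfBoundary s (x + v) := by
  have hadj : ∀ a b : Site, adj a b → adj (a + v) (b + v) := by
    intro a b hab
    simpa [adj] using hab
  obtain ⟨hx, y, hxy, hy⟩ := h
  refine ⟨hx, y + v, hadj _ _ hxy, fun T => ?_⟩
  obtain ⟨w, hw, hyw⟩ := hy (T.image fun z => z - v)
  refine ⟨w + v, fun hT => hw (Finset.mem_image.2 ⟨_, hT, by simp⟩), ?_⟩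
  exact hyw.induct (Q := fun y => JoinedIn adj {z | s z = false} (y + v) (w + v))
    (fun hw => JoinedIn.refl hw) fun a b ha hab _ ih => ih.cons ha (hadj _ _ hab)

/-! ### Measurability -/

lemma measurableSet_reachInf (R : Site → Site → Prop) (b : Bool) (x : Site) :
    MeasurableSet {s : Site → Bool | ReachInf R {z | s z = b} x} := by
  have hcoord : ∀ z : Site, MeasurableSet {s : Site → Bool | s z = b} := fun z =>
    measurableSet_eq_fun (measurable_pi_apply z) measurable_const
  unfold ReachInf JoinedIn
  simp only [Set.ofPred_forall, Set.ofPred_exists, Set.ofPred_and]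
  refine MeasurableSet.iInter fun T => MeasurableSet.iUnion fun w =>
    MeasurableSet.inter (MeasurableSet.iInter fun _ => MeasurableSet.const False)
    (MeasurableSet.iUnion fun P => (MeasurableSet.const _).inter
      (MeasurableSet.inter ?_ ((MeasurableSet.const _).inter (MeasurableSet.const _))))
  exact MeasurableSet.iInter fun z => MeasurableSet.iInter fun _ => hcoord z

lemma measurableSet_onInfBoundary (x : Site) :
    MeasurableSet {s : Site → Bool | OnInfBoundary s x} := by
  unfold OnInfBoundary
  simp only [Set.ofPred_exists, Set.ofPred_and]
  exact (measurableSet_eq_fun (measurable_pi_apply x) measurable_const).inter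
    (MeasurableSet.iUnion fun y => (MeasurableSet.const _).inter
      (measurableSet_reachInf adj false y))

lemma measurableSet_inInfinite1 (x : Site) : MeasurableSet {σ : Config | InInfinite1 σ x} := by
  simp only [inInfinite1_iff]
  exact measurableSet_reachInf adjStar true x

lemma measurableSet_existsInfinite1 : MeasurableSet {σ : Config | ExistsInfinite1 σ} := by
  have : {σ : Config | ExistsInfinite1 σ} = ⋃ x : Site, {σ | InInfinite1 σ x} := by
    ext σ
    simp only [Set.mem_ofPred_eq, Set.mem_iUnion]
    constructor
    · rintro ⟨S, hS, hinf⟩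
      obtain ⟨x, hx⟩ := hS.1
      exact ⟨x, S, hS, hinf, hx⟩
    · rintro ⟨x, S, hS, hinf, -⟩
      exact ⟨S, hS, hinf⟩
  rw [this]
  exact MeasurableSet.iUnion measurableSet_inInfinite1

/-- From uniqueness of the infinite clusters, translation invariance of the conditional
distribution of `S₁*` given coexistence, and positive probability of an infinite
`1*`cluster, one gets a uniform lower bound `c > 0` for `μ'(z ↔ ∞ by a 1*cluster)`. -/
theorem statement12 (μ : Measure Config) [IsProbabilityMeasure μ]
    (h0 : ∀ᵐ σ ∂μ, UniqueInfinite0 σ)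
    (h1 : ∀ᵐ σ ∂μ, AtMostOneInfinite1 σ)
    (hti : ∀ v : Site, ∀ A : Set (Site → Bool), MeasurableSet A →
      ProbabilityTheory.cond μ {σ | CoexistUnique σ} ((fun σ => fillInd σ) ⁻¹' A)
        = ProbabilityTheory.cond μ {σ | CoexistUnique σ}
            ((fun σ => fun z => fillInd σ (z + v)) ⁻¹' A))
    (hpos : 0 < μ {σ | ExistsInfinite1 σ}) :
    ∃ c : ℝ≥0∞, 0 < c ∧ ∀ z : Site, c ≤ μ {σ | InInfinite1 σ z} := by
  set E : Set Config := {σ | CoexistUnique σ} with hE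
  have hEae : E =ᵐ[μ] {σ | ExistsInfinite1 σ} := by
    filter_upwards [h0, h1] with σ hσ0 hσ1
    apply propext
    constructor
    · rintro ⟨-, S, hS, -⟩
      exact ⟨S, hS⟩
    · rintro ⟨S, hS⟩
      exact ⟨hσ0, S, hS, fun T hT => hσ1 T S hT.1 hT.2 hS.1 hS.2⟩
  have hEnull : NullMeasurableSet E μ :=
    measurableSet_existsInfinite1.nullMeasurableSet.congr hEae.symm
  have hEpos : μ E ≠ 0 := by
    rw [measure_congr hEae]
    exact pos_iff_ne_zero.1 hpos
  -- `E` is only known to be null measurable, and the events below need not be measurable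
  have hcond : ∀ t : Set Config, cond μ E t = (μ E)⁻¹ * μ (t ∩ E) := by
    intro t
    rw [ProbabilityTheory.cond, Measure.smul_apply, Measure.restrict_apply₀' hEnull, smul_eq_mul]
  have hinv : ∀ x v : Site, μ ({σ | OnInfBoundary (fillInd σ) x} ∩ E)
      ≤ μ ({σ | OnInfBoundary (fillInd σ) (x + v)} ∩ E) := by
    intro x v
    have h := hti v _ (measurableSet_onInfBoundary x)
    rw [hcond, hcond, ENNReal.mul_right_inj (by simp) (by simpa using hEpos)] at h
    refine h.le.trans (measure_mono (Set.inter_subset_inter_left _ fun σ hσ => ?_))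
    exact OnInfBoundary.of_shift hσ
  obtain ⟨x, hx⟩ : ∃ x, μ ({σ | OnInfBoundary (fillInd σ) x} ∩ E) ≠ 0 := by
    by_contra hcon
    push Not at hcon
    refine hEpos (measure_mono_null ?_ (measure_iUnion_null hcon))
    intro σ hσ
    obtain ⟨x, hx⟩ := exists_onInfBoundary hσ.1.exists hσ.2.exists
    exact Set.mem_iUnion.2 ⟨x, hx, hσ⟩
  refine ⟨_, pos_iff_ne_zero.2 hx, fun z => ?_⟩
  refine (hinv x (z - x)).trans (measure_mono ?_)
  rintro σ ⟨hσ, -⟩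
  have := OnInfBoundary.inInfinite1 hσ
  simpa using this


end Percolation
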